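/- If R ⊆ α × β and S ⊆ β × γ are difunctional relations with R⁻¹ ∘ R = S ∘ S⁻¹, then R⁻¹ ∘ R ∘ S = S and R ∘ S ∘ S⁻¹ = R. (Paper's Lemma (G6 for Types), in the base case of point types.) -/

import Mathlib

/-- The converse of a relation `R ⊆ α × β`. -/
def rconv {α β : Type*} (R : Set (α × β)) : Set (β × α) := {p | (p.2, p.1) ∈ R}

/-- Composition of relations `R ⊆ α × β` and `S ⊆ β × γ`. -/
def rcomp {α β γ : Type*} (R : Set (α × β)) (S : Set (β × γ)) : Set (α × γ) :=
  {p | ∃ j, (p.1, j) ∈ R ∧ (j, p.2) ∈ S}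

/-- A relation is difunctional when `R ∘ R⁻¹ ∘ R ⊆ R`, i.e.
`(i,j) ∈ R`, `(k,j) ∈ R`, `(k,l) ∈ R` imply `(i,l) ∈ R`. -/
def Difunctional {α β : Type*} (R : Set (α × β)) : Prop :=
  ∀ ⦃i j k l⦄, (i, j) ∈ R → (k, j) ∈ R → (k, l) ∈ R → (i, l) ∈ R

theorem rcomp_assoc {α β γ δ : Type*} (R : Set (α × β)) (S : Set (β × γ)) (T : Set (γ × δ)) :
    rcomp (rcomp R S) T = rcomp R (rcomp S T) :=
  SetRel.comp_assoc R S T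

theorem subset_rcomp_rconv_rcomp {α β : Type*} (R : Set (α × β)) :
    R ⊆ rcomp (rcomp R (rconv R)) R :=
  fun ⟨i, j⟩ hij ↦ ⟨i, ⟨j, hij, hij⟩, hij⟩

theorem Difunctional.rcomp_rconv_rcomp {α β : Type*} {R : Set (α × β)} (hR : Difunctional R) :
    rcomp (rcomp R (rconv R)) R = R := by
  refine Set.Subset.antisymm ?_ (subset_rcomp_rconv_rcomp R)
  rintro ⟨i, l⟩ ⟨k, ⟨j, hij, hkj⟩, hkl⟩
  exact hR hij hkj hkl

/-- (G6 for Types), base case of point types: `R⁻¹ ∘ R ∘ S = S` and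
`R ∘ S ∘ S⁻¹ = R`. -/
theorem stmt3 {α β γ : Type*} (R : Set (α × β)) (S : Set (β × γ))
    (hR : Difunctional R) (hS : Difunctional S)
    (hdef : rcomp (rconv R) R = rcomp S (rconv S)) :
    rcomp (rcomp (rconv R) R) S = S ∧ rcomp (rcomp R S) (rconv S) = R := by
  constructor
  · rw [hdef, hS.rcomp_rconv_rcomp]
  · rw [rcomp_assoc, ← hdef, ← rcomp_assoc, hR.rcomp_rconv_rcomp]
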